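/- arXiv:1004.1326 — 2 statements merged into one kernel-verified Lean document; each statement's English description precedes it below -/
import Mathlib

section
/- Let x ∈ ℝ² with irrational slope and let y be an irrational number with irrationality measure ω(y) = 1. Then for almost every point Y on the line ℝ·(y,1)ᵀ (with respect to the 1-dimensional Lebesgue measure), the exponent μ(x, Y) ≤ 1/2. -/
open Matrix MeasureTheory

/-- Denominator `q k` of the `k`-th convergent of the continued fraction of `ξ`. -/
noncomputable def qden (ξ : ℝ) (k : ℕ) : ℝ := (GenContFract.of ξ).dens k

/-- Numerator `p k` of the `k`-th convergent of the continued fraction of `ξ`. -/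
noncomputable def pnum (ξ : ℝ) (k : ℕ) : ℝ := (GenContFract.of ξ).nums k

/-- Action of an integer matrix on `ℝ²` by left multiplication. -/
noncomputable def act (g : Matrix (Fin 2) (Fin 2) ℤ) (x : Fin 2 → ℝ) : Fin 2 → ℝ :=
  (g.map (Int.cast : ℤ → ℝ)).mulVec x

/-- Sup norm of an integer `2 × 2` matrix. -/
noncomputable def mnorm (g : Matrix (Fin 2) (Fin 2) ℤ) : ℝ :=
  max (max |(g 0 0 : ℝ)| |(g 0 1 : ℝ)|) (max |(g 1 0 : ℝ)| |(g 1 1 : ℝ)|)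

/-- Sup norm on `ℝ²`. -/
noncomputable def vnorm (v : Fin 2 → ℝ) : ℝ := max |v 0| |v 1|

/-- The set of exponents `w` such that `|v α + u| ≤ |v| ^ (-w)` has infinitely many
integer solutions `(v, u)`; its supremum is the irrationality measure `ω(α)`. -/
def omegaSet (α : ℝ) : Set ℝ :=
  {w : ℝ | {p : ℤ × ℤ | |(p.1 : ℝ) * α + (p.2 : ℝ)| ≤ |(p.1 : ℝ)| ^ (-w)}.Infinite}

/-- The set of exponents `μ` such that `|γ x - y| ≤ |γ| ^ (-μ)` for infinitely many
`γ ∈ SL(2, ℤ)`; its supremum is `μ(x, y)`. -/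
def muSet (x y : Fin 2 → ℝ) : Set ℝ :=
  {μ : ℝ | {γ : Matrix (Fin 2) (Fin 2) ℤ |
    γ.det = 1 ∧ vnorm (act γ x - y) ≤ mnorm γ ^ (-μ)}.Infinite}

/-- The set of exponents `μ` such that for all sufficiently large `T` there is
`γ ∈ SL(2, ℤ)` with `|γ| ≤ T` and `|γ x - y| ≤ T ^ (-μ)`; its supremum is `μ̂(x, y)`. -/
def muHatSet (x y : Fin 2 → ℝ) : Set ℝ :=
  {μ : ℝ | ∃ T₀ : ℝ, ∀ T : ℝ, T₀ ≤ T → ∃ γ : Matrix (Fin 2) (Fin 2) ℤ,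
    γ.det = 1 ∧ mnorm γ ≤ T ∧ vnorm (act γ x - y) ≤ T ^ (-μ)}

/-- Unimodular matrices whose rows all lie in the box `|u₀| ≤ S`, `|u₀ ξ + u₁| ≤ δ`. -/
def boxSL (ξ S δ : ℝ) : Set (Matrix (Fin 2) (Fin 2) ℤ) :=
  {g | g.det = 1 ∧ ∀ i, |(g i 0 : ℝ)| ≤ S ∧ |(g i 0 : ℝ) * ξ + g i 1| ≤ δ}

theorem exists_eq_mul_of_cross_eq_zero {e₀ e₁ f₀ f₁ a b : ℤ} (h : e₀ * f₁ - e₁ * f₀ = 1)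
    (hab : e₀ * b = e₁ * a) : ∃ m : ℤ, a = m * e₀ ∧ b = m * e₁ := by
  refine ⟨a * f₁ - b * f₀, ?_, ?_⟩
  · linear_combination (-a) * h + f₀ * hab
  · linear_combination (-b) * h + f₁ * hab

theorem Int.mem_Icc_ceil_of_abs_le {B : ℝ} {n : ℤ} (h : |(n : ℝ)| ≤ B) :
    n ∈ Set.Icc (-⌈B⌉) ⌈B⌉ := by
  have h1 := (abs_le.1 h)
  have h2 := Int.le_ceil B
  constructor
  · have : ((-⌈B⌉ : ℤ) : ℝ) ≤ n := by push_cast; linarith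
    exact_mod_cast this
  · have : (n : ℝ) ≤ (⌈B⌉ : ℤ) := by linarith
    exact_mod_cast this

theorem Int.floor_mem_Icc_ceil_of_abs_le {B x : ℝ} (h : |x| ≤ B) :
    ⌊x⌋ ∈ Set.Icc (-⌈B⌉) ⌈B⌉ := by
  have h1 := (abs_le.1 h)
  have h2 := Int.le_ceil B
  constructor
  · rw [Int.le_floor]; push_cast; linarith
  · have : (⌊x⌋ : ℝ) ≤ (⌈B⌉ : ℤ) := (Int.floor_le x).trans (by linarith)
    exact_mod_cast this

theorem ncard_Icc_ceil_le {B : ℝ} (hB : 1 ≤ B) :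
    ((Set.Icc (-⌈B⌉) ⌈B⌉).ncard : ℝ) ≤ 5 * B := by
  have h1 : (Set.Icc (-⌈B⌉) ⌈B⌉).ncard = (⌈B⌉ + 1 - -⌈B⌉).toNat := by
    rw [← Finset.coe_Icc, Set.ncard_coe_finset, Int.card_Icc]
  have h0 : 0 < ⌈B⌉ := Int.ceil_pos.2 (by linarith)
  have h2 : ((⌈B⌉ + 1 - -⌈B⌉).toNat : ℤ) = ⌈B⌉ + 1 - -⌈B⌉ := Int.toNat_of_nonneg (by lia)
  have h3 : ((⌈B⌉ + 1 - -⌈B⌉).toNat : ℝ) = ⌈B⌉ + 1 - -⌈B⌉ := by exact_mod_cast h2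
  rw [h1, h3]
  linarith [Int.ceil_lt_add_one B]

/-- Counting the members of `boxSL` with `|g₁₀| ≤ |g₀₀|`, in terms of a reference member `e` and
a linear form attaining the box norm `ρ` of its first row. -/
theorem boxSL_half_count {ξ S δ α β ρ : ℝ} (hS : 0 < S)
    {e : Matrix (Fin 2) (Fin 2) ℤ} (he : e ∈ boxSL ξ S δ)
    (hφ : ∀ u v : ℝ, |u| ≤ S → |u * ξ + v| ≤ δ → |α * u + β * v| ≤ 1)
    (hρ0 : 0 < ρ) (hρ : |α * e 0 0 + β * e 0 1| = ρ)
    (heS : |(e 0 0 : ℝ)| ≤ S * ρ) (heδ : |(e 0 0 : ℝ) * ξ + e 0 1| ≤ δ * ρ) :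
    {g | g ∈ boxSL ξ S δ ∧ |(g 1 0 : ℝ)| ≤ |(g 0 0 : ℝ)|}.Finite ∧
      ({g | g ∈ boxSL ξ S δ ∧ |(g 1 0 : ℝ)| ≤ |(g 0 0 : ℝ)|}.ncard : ℝ) ≤ 250 * (S * δ) := by
  obtain ⟨hedet, hebox⟩ := he
  rw [Matrix.det_fin_two] at hedet
  have hρ1 : ρ ≤ 1 := hρ ▸ hφ _ _ (hebox 0).1 (hebox 0).2
  have hcross : ∀ a b : ℤ, |(a : ℝ)| ≤ S → |(a : ℝ) * ξ + b| ≤ δ →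
      |((e 0 0 * b - e 0 1 * a : ℤ) : ℝ)| ≤ 2 * (S * δ * ρ) := by
    intro a b ha hb
    have : ((e 0 0 * b - e 0 1 * a : ℤ) : ℝ)
        = e 0 0 * (a * ξ + b) - a * (e 0 0 * ξ + e 0 1) := by push_cast; ring
    rw [this]
    refine (abs_sub _ _).trans ?_
    rw [abs_mul, abs_mul]
    have h1 := mul_le_mul heS hb (abs_nonneg _) (by positivity)
    have h2 := mul_le_mul ha heδ (abs_nonneg _) hS.le
    linarith
  have hB : 1 ≤ 2 * (S * δ * ρ) := by
    refine le_trans ?_ (hcross _ _ (hebox 1).1 (hebox 1).2)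
    rw [hedet]; simp
  set T : Set (ℤ × ℤ × ℤ) := Set.Icc (-⌈2 * (S * δ * ρ)⌉) ⌈2 * (S * δ * ρ)⌉ ×ˢ
    (Set.Icc (-⌈1 / ρ⌉) ⌈1 / ρ⌉ ×ˢ Set.Icc (-⌈(1 : ℝ)⌉) ⌈(1 : ℝ)⌉) with hT
  have hTfin : T.Finite := (Set.finite_Icc _ _).prod ((Set.finite_Icc _ _).prod (Set.finite_Icc _ _))
  have hTcard : (T.ncard : ℝ) ≤ 250 * (S * δ) := by
    rw [hT, Set.ncard_prod, Set.ncard_prod]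
    push_cast
    have h1 := ncard_Icc_ceil_le hB
    have h2 := ncard_Icc_ceil_le (B := 1 / ρ) (by rw [le_div_iff₀ hρ0]; linarith)
    have h3 := ncard_Icc_ceil_le (B := 1) le_rfl
    calc _ ≤ (5 * (2 * (S * δ * ρ))) * ((5 * (1 / ρ)) * (5 * 1)) := by gcongr
      _ = 250 * (S * δ) := by field_simp; ring
  let F : Matrix (Fin 2) (Fin 2) ℤ → ℤ × ℤ × ℤ := fun g =>
    (e 0 0 * g 0 1 - e 0 1 * g 0 0,
      ⌊(α * g 0 0 + β * g 0 1) / (α * e 0 0 + β * e 0 1)⌋, ⌊(g 1 0 : ℝ) / g 0 0⌋)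
  have hmaps : Set.MapsTo F {g | g ∈ boxSL ξ S δ ∧ |(g 1 0 : ℝ)| ≤ |(g 0 0 : ℝ)|} T := by
    rintro g ⟨⟨-, hg⟩, hle⟩
    refine ⟨Int.mem_Icc_ceil_of_abs_le (hcross _ _ (hg 0).1 (hg 0).2),
      Int.floor_mem_Icc_ceil_of_abs_le ?_, Int.floor_mem_Icc_ceil_of_abs_le ?_⟩
    · rw [abs_div, hρ]
      have := hφ _ _ (hg 0).1 (hg 0).2
      gcongr
    · rw [abs_div]
      exact div_le_one_of_le₀ hle (abs_nonneg _)
  have hinj : Set.InjOn F {g | g ∈ boxSL ξ S δ ∧ |(g 1 0 : ℝ)| ≤ |(g 0 0 : ℝ)|} := by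
    rintro g ⟨⟨hd, -⟩, hle⟩ g' ⟨⟨hd', -⟩, -⟩ hF
    rw [Matrix.det_fin_two] at hd hd'
    simp only [F, Prod.mk.injEq] at hF
    obtain ⟨h1, h2, h3⟩ := hF
    obtain ⟨m, hm0, hm1⟩ := exists_eq_mul_of_cross_eq_zero (a := g 0 0 - g' 0 0)
      (b := g 0 1 - g' 0 1) hedet (by linear_combination h1)
    have hm : m = 0 := by
      have h4 := Int.abs_sub_lt_one_of_floor_eq_floor h2
      have hne : α * e 0 0 + β * e 0 1 ≠ 0 := by
        intro h; rw [h, abs_zero] at hρ; linarith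
      have h5 : (α * g 0 0 + β * g 0 1) / (α * e 0 0 + β * e 0 1)
          - (α * g' 0 0 + β * g' 0 1) / (α * e 0 0 + β * e 0 1) = (m : ℝ) := by
        have e0 : (g 0 0 : ℝ) - g' 0 0 = m * e 0 0 := by exact_mod_cast hm0
        have e1 : (g 0 1 : ℝ) - g' 0 1 = m * e 0 1 := by exact_mod_cast hm1
        rw [← sub_div, div_eq_iff hne]
        linear_combination α * e0 + β * e1
      rw [h5] at h4
      exact Int.abs_lt_one_iff.1 (by exact_mod_cast h4)
    subst hm
    have e0 : g 0 0 = g' 0 0 := by linarith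
    have e1 : g 0 1 = g' 0 1 := by linarith
    obtain ⟨n, hn0, hn1⟩ := exists_eq_mul_of_cross_eq_zero (a := g 1 0 - g' 1 0)
      (b := g 1 1 - g' 1 1) hd (by linear_combination hd - hd' - g' 1 1 * e0 + g' 1 0 * e1)
    have hg0 : (g 0 0 : ℝ) ≠ 0 := by
      intro h
      rw [h, abs_zero, abs_nonpos_iff] at hle
      norm_cast at h hle
      rw [h, hle] at hd
      simp at hd
    have hn : n = 0 := by
      rw [← e0] at h3
      have h4 := Int.abs_sub_lt_one_of_floor_eq_floor h3
      have h5 : (g 1 0 : ℝ) / g 0 0 - (g' 1 0 : ℝ) / g 0 0 = n := by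
        rw [← sub_div, div_eq_iff hg0]; exact_mod_cast hn0
      rw [h5] at h4
      exact Int.abs_lt_one_iff.1 (by exact_mod_cast h4)
    subst hn
    ext i j
    fin_cases i <;> fin_cases j <;> simp <;> linarith
  refine ⟨Set.Finite.of_injOn hmaps hinj hTfin, le_trans ?_ hTcard⟩
  exact_mod_cast Set.ncard_le_ncard_of_injOn F hmaps hinj hTfin

theorem boxSL_count {ξ S δ : ℝ} (hS : 0 < S) (hδ : 0 < δ) :
    (boxSL ξ S δ).Finite ∧ ((boxSL ξ S δ).ncard : ℝ) ≤ 500 * (S * δ) := by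
  rcases (boxSL ξ S δ).eq_empty_or_nonempty with h | ⟨e, he⟩
  · rw [h]; simp; positivity
  have hhalf : {g | g ∈ boxSL ξ S δ ∧ |(g 1 0 : ℝ)| ≤ |(g 0 0 : ℝ)|}.Finite ∧
      ({g | g ∈ boxSL ξ S δ ∧ |(g 1 0 : ℝ)| ≤ |(g 0 0 : ℝ)|}.ncard : ℝ) ≤ 250 * (S * δ) := by
    have hne : ¬ ((e 0 0 : ℝ) = 0 ∧ (e 0 0 : ℝ) * ξ + e 0 1 = 0) := by
      rintro ⟨h0, h1⟩
      rw [h0, zero_mul, zero_add] at h1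
      have hd := he.1
      norm_cast at h0 h1
      rw [Matrix.det_fin_two, h0, h1] at hd
      simp at hd
    rcases le_total (|(e 0 0 : ℝ)| / S) (|(e 0 0 : ℝ) * ξ + e 0 1| / δ) with hle | hle
    · have hpos : 0 < |(e 0 0 : ℝ) * ξ + e 0 1| / δ := by
        refine lt_of_le_of_ne (by positivity) fun h => hne ?_
        rw [← h] at hle
        have h0 := le_antisymm hle (by positivity)
        have h1 := h.symm
        rw [div_eq_zero_iff, abs_eq_zero] at h0 h1
        exact ⟨h0.resolve_right hS.ne', h1.resolve_right hδ.ne'⟩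
      refine boxSL_half_count (α := ξ / δ) (β := 1 / δ) hS he ?_ hpos ?_ ?_ ?_
      · intro u v _ h
        rw [show ξ / δ * u + 1 / δ * v = (u * ξ + v) / δ by ring, abs_div, abs_of_pos hδ]
        exact div_le_one_of_le₀ h hδ.le
      · rw [show ξ / δ * e 0 0 + 1 / δ * e 0 1 = (e 0 0 * ξ + e 0 1) / δ by ring, abs_div,
          abs_of_pos hδ]
      · rwa [div_le_iff₀' hS] at hle
      · exact (mul_div_cancel₀ _ hδ.ne').ge
    · have hpos : 0 < |(e 0 0 : ℝ)| / S := by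
        refine lt_of_le_of_ne (by positivity) fun h => hne ?_
        rw [← h] at hle
        have h0 := le_antisymm hle (by positivity)
        have h1 := h.symm
        rw [div_eq_zero_iff, abs_eq_zero] at h0 h1
        exact ⟨h1.resolve_right hS.ne', h0.resolve_right hδ.ne'⟩
      refine boxSL_half_count (α := 1 / S) (β := 0) hS he ?_ hpos ?_ ?_ ?_
      · intro u v h _
        rw [show 1 / S * u + 0 * v = u / S by ring, abs_div, abs_of_pos hS]
        exact div_le_one_of_le₀ h hS.le
      · rw [show 1 / S * (e 0 0 : ℝ) + 0 * e 0 1 = e 0 0 / S by ring, abs_div, abs_of_pos hS]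
      · exact (mul_div_cancel₀ _ hS.ne').ge
      · rwa [div_le_iff₀' hδ] at hle
  obtain ⟨hfin, hcard⟩ := hhalf
  let swap : Matrix (Fin 2) (Fin 2) ℤ → Matrix (Fin 2) (Fin 2) ℤ := fun g =>
    !![-g 1 0, -g 1 1; g 0 0, g 0 1]
  have hsub : boxSL ξ S δ ⊆ {g | g ∈ boxSL ξ S δ ∧ |(g 1 0 : ℝ)| ≤ |(g 0 0 : ℝ)|} ∪
      swap '' {g | g ∈ boxSL ξ S δ ∧ |(g 1 0 : ℝ)| ≤ |(g 0 0 : ℝ)|} := by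
    intro g hg
    rcases le_total |(g 1 0 : ℝ)| |(g 0 0 : ℝ)| with h | h
    · exact Or.inl ⟨hg, h⟩
    · refine Or.inr ⟨!![g 1 0, g 1 1; -g 0 0, -g 0 1], ⟨⟨?_, ?_⟩, ?_⟩, ?_⟩
      · have := hg.1
        rw [Matrix.det_fin_two] at this
        rw [Matrix.det_fin_two_of]
        linarith
      · have h0 := hg.2 0
        have h1 := hg.2 1
        intro i
        fin_cases i
        · simpa using h1
        · have : ((-g 0 0 : ℤ) : ℝ) * ξ + ((-g 0 1 : ℤ) : ℝ) = -(g 0 0 * ξ + g 0 1) := by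
            push_cast; ring
          change |((-g 0 0 : ℤ) : ℝ)| ≤ S ∧ |((-g 0 0 : ℤ) : ℝ) * ξ + ((-g 0 1 : ℤ) : ℝ)| ≤ δ
          rw [this, abs_neg, Int.cast_neg, abs_neg]
          exact h0
      · simpa using h
      · ext i j
        fin_cases i <;> fin_cases j <;> simp [swap]
  have hfin2 := hfin.union (hfin.image swap)
  refine ⟨hfin2.subset hsub, ?_⟩
  have h1 := Set.ncard_le_ncard hsub hfin2
  have h2 := h1.trans ((Set.ncard_union_le _ _).trans
    (Nat.add_le_add_left (Set.ncard_image_le (f := swap) hfin) _))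
  have h3 : ((boxSL ξ S δ).ncard : ℝ) ≤ _ := Nat.cast_le.2 h2
  push_cast at h3
  linarith

/-- If `ω(y) = 1`, then at every large height `Q` there is a unimodular basis of `ℤ²` formed by
approximations to `y` of quality `Q ^ (ε - 1)`. -/
theorem eventually_exists_unimodular_approx {y : ℝ} (hy : Irrational y)
    (hωy : ∀ ε : ℝ, 0 < ε →
      {p : ℤ × ℤ | |(p.1 : ℝ) * y + (p.2 : ℝ)| ≤ |(p.1 : ℝ)| ^ (-(1 + ε))}.Finite)
    {ε : ℝ} (hε : 0 < ε) :
    ∀ᶠ Q : ℕ in Filter.atTop, ∃ p q p' q' : ℤ, p * q' - p' * q = 1 ∧ |(q : ℝ)| ≤ Q ∧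
      |(q' : ℝ)| ≤ Q ∧ |(q : ℝ) * y - p| ≤ 2 * (Q : ℝ) ^ (ε - 1) ∧
      |(q' : ℝ) * y - p'| ≤ 2 * (Q : ℝ) ^ (ε - 1) := by
  have hfar : ∀ᶠ Q : ℕ in Filter.atTop,
      ∀ u ∈ {p : ℤ × ℤ | |(p.1 : ℝ) * y + (p.2 : ℝ)| ≤ |(p.1 : ℝ)| ^ (-(1 + ε))},
        u.1 ≠ 0 → 1 / (Q : ℝ) < |(u.1 : ℝ) * y + u.2| := by
    rw [Filter.eventually_all_finite (hωy ε hε)]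
    intro u _
    by_cases h0 : u.1 = 0
    · simp [h0]
    have hpos : 0 < |(u.1 : ℝ) * y + u.2| := by
      rw [abs_pos]
      exact ((hy.intCast_mul h0).add_intCast u.2).ne_zero
    filter_upwards [tendsto_one_div_atTop_nhds_zero_nat.eventually (gt_mem_nhds hpos)] with Q hQ _
      using hQ
  filter_upwards [hfar, Filter.eventually_ge_atTop 1] with Q hQ hQ1
  obtain ⟨r, hr, hrQ⟩ := Real.exists_rat_abs_sub_le_and_den_le y (n := Q) (by lia)
  have hQ1' : (1 : ℝ) ≤ Q := by exact_mod_cast hQ1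
  have hden : (0 : ℝ) < r.den := by exact_mod_cast r.den_pos
  have hden1 : (1 : ℝ) ≤ r.den := by exact_mod_cast r.den_pos
  have hrQ' : (r.den : ℝ) ≤ Q := by exact_mod_cast hrQ
  have happ : |(r.den : ℝ) * y - r.num| ≤ 1 / Q := by
    have h1 : (r.den : ℝ) * y - r.num = r.den * (y - r) := by
      have : (r : ℝ) = r.num / r.den := by exact_mod_cast (Rat.num_div_den r).symm
      rw [this]; field_simp
    rw [h1, abs_mul, abs_of_pos hden]
    calc (r.den : ℝ) * |y - r| ≤ r.den * (1 / ((Q + 1) * r.den)) := by gcongr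
      _ = 1 / (Q + 1) := by field_simp
      _ ≤ 1 / Q := by gcongr; linarith
  have hlow : (Q : ℝ) ^ (1 - ε) ≤ r.den := by
    by_contra! hlt
    have hnot : ((r.den : ℤ), -r.num) ∉
        {p : ℤ × ℤ | |(p.1 : ℝ) * y + (p.2 : ℝ)| ≤ |(p.1 : ℝ)| ^ (-(1 + ε))} := by
      intro hmem
      have := hQ _ hmem (by simp)
      push_cast at this
      rw [← sub_eq_add_neg] at this
      exact this.not_ge happ
    simp only [Set.mem_ofPred_eq, not_le] at hnot
    push_cast at hnot
    rw [← sub_eq_add_neg, abs_of_pos hden, Real.rpow_neg hden.le] at hnot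
    have h1 := hnot.trans_le happ
    rw [one_div] at h1
    have h2 : (Q : ℝ) < (r.den : ℝ) ^ (1 + ε) :=
      (inv_lt_inv₀ (by positivity) (by linarith)).1 h1
    have h3 : (r.den : ℝ) ^ (1 + ε) ≤ ((Q : ℝ) ^ (1 - ε)) ^ (1 + ε) := by gcongr
    rw [← Real.rpow_mul (by linarith)] at h3
    have h4 : (Q : ℝ) ^ ((1 - ε) * (1 + ε)) ≤ (Q : ℝ) ^ (1 : ℝ) :=
      Real.rpow_le_rpow_of_exponent_le hQ1' (by nlinarith)
    rw [Real.rpow_one] at h4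
    linarith
  have hlow' : 1 / (r.den : ℝ) ≤ (Q : ℝ) ^ (ε - 1) := by
    rw [show ε - 1 = -(1 - ε) by ring, Real.rpow_neg (by linarith), one_div]
    gcongr
  have hQε : 1 / (Q : ℝ) ≤ (Q : ℝ) ^ (ε - 1) := (by gcongr : 1 / (Q : ℝ) ≤ 1 / r.den).trans hlow'
  obtain ⟨a, b, hab⟩ : IsCoprime r.num (r.den : ℤ) := by
    rw [Int.isCoprime_iff_gcd_eq_one]
    exact r.reduced
  have hdenZ : (0 : ℤ) < r.den := by exact_mod_cast r.den_pos
  have hmod := Int.emod_add_mul_ediv a r.den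
  have h0 : 0 ≤ a % (r.den : ℤ) := Int.emod_nonneg _ hdenZ.ne'
  have h1 : a % (r.den : ℤ) < r.den := Int.emod_lt_of_pos _ hdenZ
  set q' := a % (r.den : ℤ)
  set k := a / (r.den : ℤ)
  have hdet : r.num * q' - -(b + r.num * k) * r.den = 1 := by
    linear_combination hab + r.num * hmod
  have h0' : (0 : ℝ) ≤ q' := by exact_mod_cast h0
  have h1' : (q' : ℝ) ≤ r.den := by exact_mod_cast h1.le
  refine ⟨r.num, r.den, -(b + r.num * k), q', hdet, ?_, ?_, ?_, ?_⟩
  · push_cast; rwa [abs_of_pos hden]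
  · rw [abs_of_nonneg h0']; linarith
  · push_cast
    have : 0 ≤ 1 / (Q : ℝ) := by positivity
    linarith
  · have hdet' : (r.num : ℝ) * q' - ((-(b + r.num * k) : ℤ) : ℝ) * r.den = 1 := by
      exact_mod_cast hdet
    set p' : ℝ := ((-(b + r.num * k) : ℤ) : ℝ)
    have h2 : (q' : ℝ) * y - p' = (q' * (r.den * y - r.num) + 1) * (1 / r.den) := by
      field_simp
      linear_combination hdet'
    rw [h2, abs_mul, abs_of_pos (by positivity : 0 < 1 / (r.den : ℝ))]
    have h3 : |(q' : ℝ) * (r.den * y - r.num) + 1| ≤ 2 := by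
      refine (abs_add_le _ _).trans ?_
      rw [abs_mul, abs_of_nonneg h0', abs_one]
      have : (q' : ℝ) * |(r.den : ℝ) * y - r.num| ≤ Q * (1 / Q) :=
        mul_le_mul (h1'.trans hrQ') happ (abs_nonneg _) (by linarith)
      rw [mul_one_div_cancel (by linarith)] at this
      linarith
    gcongr

/-- Multiplying a unimodular matrix that sends `x` near the line `ℝ (y, 1)` by a row `(q, -p)`
given by an approximation `p / q` to `y` produces a short vector. -/
theorem approx_row_bound {X A y ξ Q D a b c d p q t : ℝ} (hX : X ≠ 0) (hA : 1 ≤ A) (hQ : 1 ≤ Q)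
    (hAQ : 2 * A ≤ Q ^ 2) (hD : 1 / Q ≤ D) (hdet : a * d - b * c = 1) (hc : |c| ≤ 16 * Q ^ 4)
    (htA : 1 / A ≤ |t|) (htA' : |t| ≤ A) (h1 : |X * (a * ξ + b) - t * y| ≤ 1 / Q ^ 2)
    (h2 : |X * (c * ξ + d) - t| ≤ 1 / Q ^ 2) (hq : |q| ≤ Q) (hp : |q * y - p| ≤ D) :
    |q * a - p * c| ≤ (2 * A * (|X| + 16 * (1 + |y|)) + 16) * (Q ^ 4 * D) ∧
      |(q * a - p * c) * ξ + (q * b - p * d)| ≤ (2 + |y| + A) / |X| * D := by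
  have hX' : 0 < |X| := abs_pos.2 hX
  have hQ0 : 0 < Q := by linarith
  have hA0 : 0 < A := by linarith
  have hD0 : 0 < D := lt_of_lt_of_le (by positivity) hD
  have hQ2 : 1 / Q ^ 2 ≤ 1 / (2 * A) := by gcongr
  have hQ2' : 1 / Q ^ 2 ≤ 1 := by rw [div_le_one₀ (by positivity)]; nlinarith
  set η := a * ξ + b - y * (c * ξ + d) with hη
  have hηX : |X| * |η| ≤ (1 + |y|) / Q ^ 2 := by
    rw [← abs_mul, show X * η = (X * (a * ξ + b) - t * y) - y * (X * (c * ξ + d) - t) by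
      rw [hη]; ring]
    refine (abs_sub _ _).trans ?_
    rw [abs_mul]
    calc _ ≤ 1 / Q ^ 2 + |y| * (1 / Q ^ 2) := by gcongr
      _ = _ := by ring
  have hup : |X| * |c * ξ + d| ≤ A + 1 := by
    rw [← abs_mul]
    have := abs_sub_abs_le_abs_sub (X * (c * ξ + d)) t
    linarith
  have hlo : 1 / (2 * A) ≤ |X| * |c * ξ + d| := by
    rw [← abs_mul]
    have h3 := abs_sub_abs_le_abs_sub t (X * (c * ξ + d))
    rw [abs_sub_comm] at h3
    have : 1 / A = 1 / (2 * A) + 1 / (2 * A) := by field_simp; norm_num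
    linarith
  have hΔ : |a - c * y| ≤ 2 * A * (|X| + 16 * (1 + |y|)) * Q ^ 2 := by
    have h3 : |a - c * y| * (1 / (2 * A)) ≤ (|X| + 16 * (1 + |y|)) * Q ^ 2 := by
      calc |a - c * y| * (1 / (2 * A)) ≤ |a - c * y| * (|X| * |c * ξ + d|) := by gcongr
        _ = |X| * |1 + c * η| := by
          rw [← hdet, mul_left_comm, ← abs_mul]
          congr 2
          rw [hη]; ring
        _ ≤ |X| * (1 + |c| * |η|) := by
          gcongr
          refine (abs_add_le _ _).trans ?_
          rw [abs_mul, abs_one]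
        _ = |X| + |c| * (|X| * |η|) := by ring
        _ ≤ |X| * Q ^ 2 + 16 * Q ^ 4 * ((1 + |y|) / Q ^ 2) := by
          gcongr
          exact le_mul_of_one_le_right hX'.le (by nlinarith)
        _ = _ := by field_simp
    rw [mul_one_div, div_le_iff₀ (by positivity)] at h3
    linarith
  have hQD : 1 ≤ Q * D := by rwa [div_le_iff₀' hQ0] at hD
  constructor
  · rw [show q * a - p * c = q * (a - c * y) + c * (q * y - p) by ring]
    refine (abs_add_le _ _).trans ?_
    rw [abs_mul, abs_mul]
    set C := 2 * A * (|X| + 16 * (1 + |y|))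
    have hC : 0 ≤ C := by positivity
    calc |q| * |a - c * y| + |c| * |q * y - p| ≤ Q * (C * Q ^ 2) + 16 * Q ^ 4 * D := by gcongr
      _ = C * Q ^ 3 * 1 + 16 * Q ^ 4 * D := by ring
      _ ≤ C * Q ^ 3 * (Q * D) + 16 * Q ^ 4 * D := by gcongr
      _ = _ := by ring
  · rw [show (q * a - p * c) * ξ + (q * b - p * d) = q * η + (q * y - p) * (c * ξ + d) by
      rw [hη]; ring]
    rw [div_mul_eq_mul_div, le_div_iff₀' hX']
    calc |X| * |q * η + (q * y - p) * (c * ξ + d)|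
        ≤ |X| * (|q| * |η| + |q * y - p| * |c * ξ + d|) := by
          gcongr
          refine (abs_add_le _ _).trans ?_
          rw [abs_mul, abs_mul]
      _ = |q| * (|X| * |η|) + |q * y - p| * (|X| * |c * ξ + d|) := by ring
      _ ≤ Q * ((1 + |y|) / Q ^ 2) + D * (A + 1) := by gcongr
      _ = (1 + |y|) * (1 / Q) + D * (A + 1) := by field_simp
      _ ≤ (1 + |y|) * D + D * (A + 1) := by gcongr
      _ = _ := by ring

theorem act_apply_zero (g : Matrix (Fin 2) (Fin 2) ℤ) (x : Fin 2 → ℝ) :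
    act g x 0 = g 0 0 * x 0 + g 0 1 * x 1 := by
  simp [act, Matrix.mulVec, dotProduct, Fin.sum_univ_two]

theorem act_apply_one (g : Matrix (Fin 2) (Fin 2) ℤ) (x : Fin 2 → ℝ) :
    act g x 1 = g 1 0 * x 0 + g 1 1 * x 1 := by
  simp [act, Matrix.mulVec, dotProduct, Fin.sum_univ_two]

theorem abs_le_mnorm (g : Matrix (Fin 2) (Fin 2) ℤ) (i j : Fin 2) : |(g i j : ℝ)| ≤ mnorm g := by
  fin_cases i <;> fin_cases j <;> simp [mnorm]

theorem one_le_mnorm {g : Matrix (Fin 2) (Fin 2) ℤ} (hg : g.det = 1) : 1 ≤ mnorm g := by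
  by_contra! h
  have hz : ∀ i j, g i j = 0 := fun i j =>
    Int.abs_lt_one_iff.1 (by exact_mod_cast (abs_le_mnorm g i j).trans_lt h)
  rw [Matrix.det_fin_two, hz 0 0, hz 0 1] at hg
  simp at hg

theorem finite_setOf_mnorm_le (B : ℝ) :
    {g : Matrix (Fin 2) (Fin 2) ℤ | mnorm g ≤ B}.Finite := by
  have h : {g : Fin 2 → Fin 2 → ℤ | ∀ i, g i ∈ {v : Fin 2 → ℤ | ∀ j, v j ∈
      Set.Icc (-⌈B⌉) ⌈B⌉}}.Finite :=
    Set.Finite.pi' fun _ => Set.Finite.pi' fun _ => Set.finite_Icc _ _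
  exact h.subset fun g hg i j => Int.mem_Icc_ceil_of_abs_le ((abs_le_mnorm g i j).trans hg)

/-- Unimodular matrices of size about `Q ^ 4` sending `x` to within `Q ^ (-2)` of a point `t (y, 1)`
with `1 / A ≤ |t| ≤ A`. -/
def nearLine (x : Fin 2 → ℝ) (y A : ℝ) (Q : ℕ) : Set (Matrix (Fin 2) (Fin 2) ℤ) :=
  {γ | γ.det = 1 ∧ mnorm γ ≤ 16 * (Q : ℝ) ^ 4 ∧
    ∃ t : ℝ, 1 / A ≤ |t| ∧ |t| ≤ A ∧ vnorm (act γ x - t • ![y, 1]) ≤ 1 / (Q : ℝ) ^ 2}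

theorem nearLine_count (x : Fin 2 → ℝ) (hx2 : x 1 ≠ 0) {y : ℝ} (hy : Irrational y)
    (hωy : ∀ ε : ℝ, 0 < ε →
      {p : ℤ × ℤ | |(p.1 : ℝ) * y + (p.2 : ℝ)| ≤ |(p.1 : ℝ)| ^ (-(1 + ε))}.Finite)
    {A : ℝ} (hA : 1 ≤ A) {ε : ℝ} (hε : 0 < ε) :
    ∃ C : ℝ, 0 ≤ C ∧ ∀ᶠ Q : ℕ in Filter.atTop, (nearLine x y A Q).Finite ∧
      ((nearLine x y A Q).ncard : ℝ) ≤ C * (Q : ℝ) ^ (2 + 2 * ε) := by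
  have hX : 0 < |x 1| := abs_pos.2 hx2
  set C₁ := 2 * A * (|x 1| + 16 * (1 + |y|)) + 16 with hC₁
  set C₂ := (2 + |y| + A) / |x 1| with hC₂
  have hC₁0 : 0 < C₁ := by positivity
  have hC₂0 : 0 < C₂ := by positivity
  refine ⟨2000 * (C₁ * C₂), by positivity, ?_⟩
  have hlarge : ∀ᶠ Q : ℕ in Filter.atTop, 2 * A ≤ (Q : ℝ) :=
    tendsto_natCast_atTop_atTop.eventually_ge_atTop _
  filter_upwards [eventually_exists_unimodular_approx hy hωy hε, hlarge] with Q hQ hAQ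
  obtain ⟨p, q, p', q', hdet, hq, hq', hp, hp'⟩ := hQ
  have hQ1 : (1 : ℝ) ≤ Q := by linarith
  have hQ0 : (0 : ℝ) < Q := by linarith
  set D := 2 * (Q : ℝ) ^ (ε - 1) with hDdef
  have hD : 1 / (Q : ℝ) ≤ D := by
    have h1 : (Q : ℝ) ^ (-1 : ℝ) ≤ (Q : ℝ) ^ (ε - 1) :=
      Real.rpow_le_rpow_of_exponent_le hQ1 (by linarith)
    rw [Real.rpow_neg_one, inv_eq_one_div] at h1
    have h2 : 0 < 1 / (Q : ℝ) := by positivity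
    linarith
  have hD0 : 0 < D := by positivity
  obtain ⟨hfin, hcard⟩ := boxSL_count (ξ := x 0 / x 1) (S := C₁ * ((Q : ℝ) ^ 4 * D))
    (δ := C₂ * D) (by positivity) (by positivity)
  let N : Matrix (Fin 2) (Fin 2) ℤ := !![q', -p'; -q, p]
  have hN : N.det = 1 := by
    rw [Matrix.det_fin_two_of]; linarith
  have hmaps : ∀ γ ∈ nearLine x y A Q,
      N * γ ∈ boxSL (x 0 / x 1) (C₁ * ((Q : ℝ) ^ 4 * D)) (C₂ * D) := by
    rintro γ ⟨hγ, hγQ, t, ht, ht', hv⟩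
    refine ⟨by rw [Matrix.det_mul, hN, hγ, one_mul], ?_⟩
    obtain ⟨hv0, hv1⟩ := max_le_iff.1 hv
    simp only [Pi.sub_apply, Pi.smul_apply, act_apply_zero, act_apply_one, Matrix.cons_val_zero,
      Matrix.cons_val_one, smul_eq_mul, mul_one] at hv0 hv1
    have hrow : ∀ u v : ℝ, u * x 0 + v * x 1 = x 1 * (u * (x 0 / x 1) + v) := by
      intro u v; field_simp
    rw [hrow] at hv0 hv1
    have hdγ : (γ 0 0 : ℝ) * γ 1 1 - γ 0 1 * γ 1 0 = 1 := by
      rw [Matrix.det_fin_two] at hγ; exact_mod_cast hγ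
    have key := fun (u v : ℝ) hu huv => approx_row_bound (q := u) (p := v) hx2 hA hQ1
      (by nlinarith) hD hdγ ((abs_le_mnorm γ 1 0).trans hγQ) ht ht' hv0 hv1 hu huv
    intro i
    fin_cases i
    · have := key q' p' hq' hp'
      simp only [Matrix.mul_apply, Fin.sum_univ_two, N]
      simpa [← sub_eq_add_neg] using this
    · have := key (-q) (-p) (by rwa [abs_neg])
        (by rw [show -(q : ℝ) * y - -p = -(q * y - p) by ring, abs_neg]; exact hp)
      simp only [Matrix.mul_apply, Fin.sum_univ_two, N]
      simpa using this
  have hinj : Set.InjOn (fun γ => N * γ) (nearLine x y A Q) := by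
    intro γ _ γ' _ h
    have h' := congrArg (fun M => N.adjugate * M) h
    simpa [← Matrix.mul_assoc, Matrix.adjugate_mul, hN] using h'
  refine ⟨Set.Finite.of_injOn hmaps hinj hfin, ?_⟩
  have hle : ((nearLine x y A Q).ncard : ℝ) ≤ _ :=
    Nat.cast_le.2 (Set.ncard_le_ncard_of_injOn _ hmaps hinj hfin)
  refine hle.trans (hcard.trans (le_of_eq ?_))
  have hpow : (Q : ℝ) ^ (2 + 2 * ε) = (Q : ℝ) ^ 4 * ((Q : ℝ) ^ (ε - 1)) ^ 2 := by
    rw [← Real.rpow_natCast, ← Real.rpow_natCast, ← Real.rpow_mul hQ0.le, ← Real.rpow_add hQ0]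
    congr 1
    push_cast
    ring
  rw [hpow, hDdef]
  ring

/-- The points `t` of the line, at scale `j`, that are well approximated with exponent `μ`. -/
def wellApprox (x : Fin 2 → ℝ) (y A μ : ℝ) (j : ℕ) : Set ℝ :=
  {t | 1 / A ≤ |t| ∧ |t| ≤ A ∧ ∃ γ : Matrix (Fin 2) (Fin 2) ℤ, γ.det = 1 ∧ (16 : ℝ) ^ j ≤ mnorm γ ∧
    mnorm γ < 16 ^ (j + 1) ∧ vnorm (act γ x - t • ![y, 1]) ≤ mnorm γ ^ (-μ)}

theorem volume_wellApprox_le (x : Fin 2 → ℝ) (y A : ℝ) {μ : ℝ} (hμ : 1 / 2 < μ) (j : ℕ)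
    (hfin : (nearLine x y A (2 ^ j)).Finite) :
    volume (wellApprox x y A μ j) ≤
      ENNReal.ofReal ((nearLine x y A (2 ^ j)).ncard * (2 * ((16 : ℝ) ^ j) ^ (-μ))) := by
  have h16 : ((2 ^ j : ℕ) : ℝ) ^ 4 = 16 ^ j := by
    push_cast; rw [← pow_mul, mul_comm, pow_mul]; norm_num
  have h1 : (1 : ℝ) ≤ 16 ^ j := one_le_pow₀ (by norm_num)
  have hsub : wellApprox x y A μ j ⊆
      ⋃ γ ∈ hfin.toFinset, Metric.closedBall (act γ x 1) (((16 : ℝ) ^ j) ^ (-μ)) := by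
    rintro t ⟨ht, ht', γ, hγ, hj, hj', hv⟩
    have hle : mnorm γ ^ (-μ) ≤ ((16 : ℝ) ^ j) ^ (-μ) :=
      Real.rpow_le_rpow_of_nonpos (by positivity) hj (by linarith)
    have hhalf : ((16 : ℝ) ^ j) ^ (-μ) ≤ 1 / ((2 ^ j : ℕ) : ℝ) ^ 2 := by
      calc ((16 : ℝ) ^ j) ^ (-μ) ≤ ((16 : ℝ) ^ j) ^ (-(1 / 2) : ℝ) :=
            Real.rpow_le_rpow_of_exponent_le h1 (by linarith)
        _ = 1 / ((2 ^ j : ℕ) : ℝ) ^ 2 := by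
          rw [← h16, show ((2 ^ j : ℕ) : ℝ) ^ 4 = (((2 ^ j : ℕ) : ℝ) ^ 2) ^ 2 by ring,
            Real.rpow_neg (by positivity), ← Real.sqrt_eq_rpow, Real.sqrt_sq (by positivity),
            one_div]
    simp only [Set.mem_iUnion, Set.Finite.mem_toFinset]
    refine ⟨γ, ⟨hγ, ?_, t, ht, ht', (hv.trans hle).trans hhalf⟩, ?_⟩
    · rw [h16]
      exact hj'.le.trans_eq (by ring)
    · rw [Metric.mem_closedBall, Real.dist_eq, abs_sub_comm]
      have := (max_le_iff.1 (hv.trans hle)).2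
      simpa using this
  calc volume (wellApprox x y A μ j)
      ≤ ∑ γ ∈ hfin.toFinset, volume (Metric.closedBall (act γ x 1) (((16 : ℝ) ^ j) ^ (-μ))) :=
        (measure_mono hsub).trans (measure_biUnion_finset_le _ _)
    _ = _ := by
      simp only [Real.volume_closedBall, Finset.sum_const, nsmul_eq_mul]
      rw [← Set.ncard_eq_toFinset_card _ hfin,
        ENNReal.ofReal_mul (p := ((nearLine x y A (2 ^ j)).ncard : ℝ)) (Nat.cast_nonneg _),
        ENNReal.ofReal_natCast]

theorem ae_eventually_notMem_wellApprox (x : Fin 2 → ℝ) (hx2 : x 1 ≠ 0) {y : ℝ}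
    (hy : Irrational y)
    (hωy : ∀ ε : ℝ, 0 < ε →
      {p : ℤ × ℤ | |(p.1 : ℝ) * y + (p.2 : ℝ)| ≤ |(p.1 : ℝ)| ^ (-(1 + ε))}.Finite)
    {A : ℝ} (hA : 1 ≤ A) {μ : ℝ} (hμ : 1 / 2 < μ) :
    ∀ᵐ t ∂(volume : Measure ℝ), ∀ᶠ j : ℕ in Filter.atTop, t ∉ wellApprox x y A μ j := by
  obtain ⟨C, hC, hev⟩ := nearLine_count x hx2 hy hωy hA (sub_pos.2 hμ)
  have hev2 := (tendsto_pow_atTop_atTop_of_one_lt (r := (2 : ℕ)) (by norm_num)).eventually hev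
  obtain ⟨J, hJ⟩ := Filter.eventually_atTop.1 hev2
  set r : ℝ := 2 ^ (1 - 2 * μ) with hr
  have hr1 : r < 1 := Real.rpow_lt_one_of_one_lt_of_neg (by norm_num) (by linarith)
  have hr0 : 0 ≤ r := by positivity
  have hbound : ∀ j, volume (wellApprox x y A μ (j + J)) ≤
      ENNReal.ofReal (2 * C * r ^ (j + J)) := by
    intro j
    obtain ⟨hfin, hcard⟩ := hJ (j + J) (by lia)
    refine (volume_wellApprox_le x y A hμ _ hfin).trans (ENNReal.ofReal_le_ofReal ?_)
    set k := j + J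
    calc ((nearLine x y A (2 ^ k)).ncard : ℝ) * (2 * ((16 : ℝ) ^ k) ^ (-μ))
        ≤ C * ((2 ^ k : ℕ) : ℝ) ^ (2 + 2 * (μ - 1 / 2)) * (2 * ((16 : ℝ) ^ k) ^ (-μ)) := by gcongr
      _ = 2 * C * r ^ k := by
        have h2 : (16 : ℝ) ^ k = (2 : ℝ) ^ (4 * (k : ℝ)) := by
          rw [Real.rpow_mul (by norm_num), Real.rpow_natCast]; norm_num
        have h3 : ((2 ^ k : ℕ) : ℝ) = (2 : ℝ) ^ (k : ℝ) := by
          rw [Real.rpow_natCast]; norm_num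
        have h4 : r ^ k = (2 : ℝ) ^ ((k : ℝ) * (2 + 2 * (μ - 1 / 2))) *
            (2 : ℝ) ^ (4 * (k : ℝ) * -μ) := by
          rw [hr, ← Real.rpow_natCast, ← Real.rpow_mul (by norm_num),
            ← Real.rpow_add (by norm_num)]
          congr 1
          ring
        rw [h2, h3, h4, ← Real.rpow_mul (by norm_num), ← Real.rpow_mul (by norm_num)]
        ring
  have hsum : Summable fun j : ℕ => 2 * C * r ^ (j + J) :=
    ((summable_nat_add_iff J).2 (summable_geometric_of_lt_one hr0 hr1)).mul_left _
  have hae := ae_eventually_notMem (μ := volume) (s := fun j => wellApprox x y A μ (j + J))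
    (ne_top_of_le_ne_top hsum.tsum_ofReal_ne_top (ENNReal.tsum_le_tsum hbound))
  filter_upwards [hae] with t ht
  obtain ⟨K, hK⟩ := Filter.eventually_atTop.1 ht
  filter_upwards [Filter.eventually_ge_atTop (K + J)] with j hj
  have := hK (j - J) (by lia)
  rwa [Nat.sub_add_cancel (by lia)] at this

/-- Theorem 3: if `x` has irrational slope and `y` is irrational with
irrationality measure `ω(y) = 1`, then for almost every point `Y` on the line `ℝ (y, 1)ᵀ`
one has `μ(x, Y) ≤ 1/2`, i.e. for every `μ > 1/2` only finitely many `γ ∈ SL(2, ℤ)`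
satisfy `|γ x - Y| ≤ |γ|^{-μ}`. -/
theorem stmt15 (x : Fin 2 → ℝ) (hx2 : x 1 ≠ 0) (hξ : Irrational (x 0 / x 1))
    (y : ℝ) (hy : Irrational y)
    (hωy : ∀ ε : ℝ, 0 < ε →
      {p : ℤ × ℤ | |(p.1 : ℝ) * y + (p.2 : ℝ)| ≤ |(p.1 : ℝ)| ^ (-(1 + ε))}.Finite) :
    ∀ᵐ c ∂(volume : Measure ℝ), ∀ μ : ℝ, 1 / 2 < μ →
      {γ : Matrix (Fin 2) (Fin 2) ℤ |
        γ.det = 1 ∧ vnorm (act γ x - c • ![y, 1]) ≤ mnorm γ ^ (-μ)}.Finite := by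
  have hae : ∀ᵐ t ∂(volume : Measure ℝ), ∀ n m : ℕ, ∀ᶠ j : ℕ in Filter.atTop,
      t ∉ wellApprox x y (n + 1) (1 / 2 + 1 / (m + 1)) j := by
    rw [ae_all_iff]
    intro n
    rw [ae_all_iff]
    intro m
    have hm : (0 : ℝ) < 1 / (m + 1) := by positivity
    exact ae_eventually_notMem_wellApprox x hx2 hy hωy (by simp) (by linarith)
  filter_upwards [hae, Measure.ae_ne volume (0 : ℝ)] with t ht ht0 μ hμ
  obtain ⟨m, hm⟩ := exists_nat_one_div_lt (sub_pos.2 hμ)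
  obtain ⟨n, hn⟩ := exists_nat_ge (max |t| (1 / |t|))
  have htpos : 0 < |t| := abs_pos.2 ht0
  obtain ⟨hn1, hn2⟩ := max_le_iff.1 hn
  obtain ⟨J, hJ⟩ := Filter.eventually_atTop.1 (ht n m)
  refine (finite_setOf_mnorm_le (16 ^ J)).subset ?_
  rintro γ ⟨hγ, hv⟩
  have h1 := one_le_mnorm hγ
  by_contra hlarge
  rw [Set.mem_ofPred_eq, not_le] at hlarge
  obtain ⟨j, hj, hj'⟩ := exists_nat_pow_near h1 (by norm_num : (1 : ℝ) < 16)
  have hJj : J ≤ j := by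
    by_contra! hlt
    have : (16 : ℝ) ^ (j + 1) ≤ 16 ^ J := pow_le_pow_right₀ (by norm_num) hlt
    linarith
  refine hJ j hJj ⟨?_, by linarith, γ, hγ, hj, hj', hv.trans ?_⟩
  · rw [div_le_iff₀ (by positivity), mul_comm, ← div_le_iff₀ htpos]
    linarith
  · exact Real.rpow_le_rpow_of_exponent_le h1 (by linarith)
end

section
/- Let ξ be an irrational number and y₁, y₂ positive reals such that y = y₁/y₂ is irrational with irrationality measure ω(y) = 1. Then for every μ < 1/3 there exist infinitely many γ = [[v₁,u₁],[v₂,u₂]] ∈ SL(2,ℤ) with v₁ > 0, v₂ > 0, 0 < v₁ξ + u₁ − y₁ ≤ |γ|^{−μ}, and 0 < v₂ξ + u₂ − y₂ ≤ |γ|^{−μ}. -/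
open Matrix MeasureTheory

/-- Neighbours `a / b < ξ < c / d` in the Farey series of order `S`. -/
theorem exists_farey_neighbours {ξ : ℝ} (hξ : Irrational ξ) (S : ℕ) (hS : 1 ≤ S) :
    ∃ a b c d : ℤ, 0 < b ∧ 0 < d ∧ b ≤ S ∧ d ≤ S ∧ (S : ℤ) < b + d ∧ b * c - a * d = 1 ∧
      (a : ℝ) < b * ξ ∧ d * ξ < c := by
  induction S, hS using Nat.le_induction with
  | base =>
    refine ⟨⌊ξ⌋, 1, ⌊ξ⌋ + 1, 1, by norm_num, by norm_num, by norm_num, by norm_num, by norm_num,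
      by ring, ?_, ?_⟩
    · have h := Int.floor_le ξ
      have h' := hξ.ne_int ⌊ξ⌋
      push_cast
      rw [one_mul]
      exact lt_of_le_of_ne h h'.symm
    · have := Int.lt_floor_add_one ξ
      push_cast
      linarith
  | succ S hS ih =>
    obtain ⟨a, b, c, d, hb, hd, hbS, hdS, hsum, hdet, h1, h2⟩ := ih
    by_cases hlt : (S : ℤ) + 1 < b + d
    · exact ⟨a, b, c, d, hb, hd, by push_cast; omega, by push_cast; omega, by push_cast; omega,
        hdet, h1, h2⟩
    · have hne : ((b + d : ℤ) : ℝ) * ξ ≠ ((a + c : ℤ) : ℝ) :=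
        (hξ.intCast_mul (by omega)).ne_int _
      rcases lt_or_gt_of_ne hne with h | h
      · exact ⟨a, b, a + c, b + d, hb, by omega, by push_cast; omega, by push_cast; omega,
          by push_cast; omega, by linear_combination hdet, h1, h⟩
      · exact ⟨a + c, b + d, c, d, by omega, hd, by push_cast; omega, by push_cast; omega,
          by push_cast; omega, by linear_combination hdet, h, h2⟩

/-- Arbitrarily fine neighbours `a / b < ξ < c / d` for which the larger denominator `d` belongs to
the smaller linear form. -/
theorem exists_neighbours_upper_closer {ξ : ℝ} (hξ : Irrational ξ) (N : ℕ) :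
    ∃ a b c d : ℤ, 0 < b ∧ b ≤ d ∧ (N : ℤ) < d ∧ b * c - a * d = 1 ∧
      (a : ℝ) < b * ξ ∧ d * ξ < c ∧ c - d * ξ ≤ b * ξ - a := by
  obtain ⟨a, b, c, d, hb, hd, -, -, hsum, hdet, h1, h2⟩ :=
    exists_farey_neighbours hξ (N + 1) (by omega)
  have hβ : 0 < c - d * ξ := by linarith
  have hα : 0 < b * ξ - a := by linarith
  obtain ⟨m, hm⟩ : ∃ m : ℤ, m = ⌊(b * ξ - a) / (c - d * ξ)⌋ := ⟨_, rfl⟩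
  have hm0 : 0 ≤ m := hm ▸ Int.floor_nonneg.2 (by positivity)
  have hm1 : (m : ℝ) * (c - d * ξ) ≤ b * ξ - a := by
    rw [← le_div_iff₀ hβ, hm]; exact Int.floor_le _
  have hm2 : b * ξ - a < (m + 1 : ℝ) * (c - d * ξ) := by
    rw [← div_lt_iff₀ hβ, hm]; exact Int.lt_floor_add_one _
  have hb' : 0 < b + m * d := by positivity
  have hne : ((b + m * d : ℤ) : ℝ) * ξ ≠ ((a + m * c : ℤ) : ℝ) :=
    (hξ.intCast_mul hb'.ne').ne_int _
  push_cast at hne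
  have hα' : 0 < (b + m * d : ℝ) * ξ - (a + m * c) := by
    refine lt_of_le_of_ne (by linarith) fun h => hne (by linarith)
  have hα'β : (b + m * d : ℝ) * ξ - (a + m * c) < c - d * ξ := by linarith
  obtain ⟨n, hn⟩ : ∃ n : ℤ, n = ⌊(c - d * ξ) / ((b + m * d : ℝ) * ξ - (a + m * c))⌋ := ⟨_, rfl⟩
  have hn0 : 1 ≤ n := by
    rw [hn, Int.le_floor, le_div_iff₀ hα']
    push_cast
    linarith
  have hn1 : (n : ℝ) * ((b + m * d : ℝ) * ξ - (a + m * c)) ≤ c - d * ξ := by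
    rw [← le_div_iff₀ hα', hn]; exact Int.floor_le _
  have hn2 : c - d * ξ < (n + 1 : ℝ) * ((b + m * d : ℝ) * ξ - (a + m * c)) := by
    rw [← div_lt_iff₀ hα', hn]; exact Int.lt_floor_add_one _
  have hnb : b + m * d ≤ n * (b + m * d) := le_mul_of_one_le_left hb'.le hn0
  have hmd : 0 ≤ m * d := by positivity
  have hd' : 0 < d + n * (b + m * d) := by omega
  have hne' : ((d + n * (b + m * d) : ℤ) : ℝ) * ξ ≠ ((c + n * (a + m * c) : ℤ) : ℝ) :=
    (hξ.intCast_mul hd'.ne').ne_int _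
  push_cast at hne'
  refine ⟨a + m * c, b + m * d, c + n * (a + m * c), d + n * (b + m * d), hb', by omega,
    by push_cast at hsum; omega, by linear_combination hdet, ?_, ?_, ?_⟩
  · push_cast; linarith
  · push_cast
    refine lt_of_le_of_ne (by linarith) hne'
  · push_cast; linarith

/-- If `|v α + u| ≤ |v| ^ (-w)` has finitely many solutions, then `|v α + u|` is bounded below by a
constant multiple of `v ^ (-w)` for all `v > 0`. -/
theorem exists_pos_mul_rpow_le_abs {α w : ℝ} (hα : Irrational α)
    (hfin : {p : ℤ × ℤ | |(p.1 : ℝ) * α + (p.2 : ℝ)| ≤ |(p.1 : ℝ)| ^ (-w)}.Finite) :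
    ∃ c : ℝ, 0 < c ∧ ∀ v u : ℤ, 0 < v → c * (v : ℝ) ^ (-w) ≤ |(v : ℝ) * α + u| := by
  have key : ∀ F : Set (ℤ × ℤ), F.Finite → ∃ c : ℝ, 0 < c ∧ c ≤ 1 ∧ ∀ p ∈ F, 0 < p.1 →
      c * (p.1 : ℝ) ^ (-w) ≤ |(p.1 : ℝ) * α + p.2| := by
    intro F hF
    induction F, hF using Set.Finite.induction_on with
    | empty => exact ⟨1, one_pos, le_rfl, by simp⟩
    | @insert p F _ _ ih =>
      obtain ⟨c, hc, hc1, h⟩ := ih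
      by_cases hp : 0 < p.1
      · have hp' : (0 : ℝ) < (p.1 : ℝ) ^ (-w) := Real.rpow_pos_of_pos (by exact_mod_cast hp) _
        have hne : (p.1 : ℝ) * α + p.2 ≠ 0 := by
          have := (hα.intCast_mul hp.ne').ne_int (-p.2)
          push_cast at this
          intro h
          exact this (by linarith)
        refine ⟨min c (|(p.1 : ℝ) * α + p.2| / (p.1 : ℝ) ^ (-w)),
          lt_min hc (div_pos (abs_pos.2 hne) hp'), (min_le_left _ _).trans hc1, ?_⟩
        rintro r (rfl | hr) hr0
        · rw [← le_div_iff₀ hp']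
          exact min_le_right _ _
        · refine le_trans ?_ (h r hr hr0)
          gcongr
          exact min_le_left _ _
      · refine ⟨c, hc, hc1, ?_⟩
        rintro r (rfl | hr) hr0
        · exact absurd hr0 hp
        · exact h r hr hr0
  obtain ⟨c, hc, hc1, h⟩ := key _ hfin
  refine ⟨c, hc, fun v u hv => ?_⟩
  by_cases hmem : |(v : ℝ) * α + u| ≤ |(v : ℝ)| ^ (-w)
  · exact h (v, u) hmem hv
  · have hv' : (0 : ℝ) < v := by exact_mod_cast hv
    rw [abs_of_pos hv', not_le] at hmem
    exact (mul_le_of_le_one_left (Real.rpow_pos_of_pos hv' _).le hc1).trans hmem.le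

/-- Under a Diophantine condition, Farey neighbours of `α` have denominators with a large
product. -/
theorem mul_sq_le_denominators_rpow {α w c₀ : ℝ} (hc₀ : 0 < c₀) (hw : 1 ≤ w)
    (hlow : ∀ v u : ℤ, 0 < v → c₀ * (v : ℝ) ^ (-w) ≤ |(v : ℝ) * α + u|)
    {a b c d : ℤ} (hb : 0 < b) (hd : 0 < d) (hdet : b * c - a * d = 1)
    (h1 : (a : ℝ) < b * α) (h2 : d * α < c) {X : ℝ} (hX : 0 ≤ X) (hsum : X ≤ b + d) :
    c₀ / 4 * X ^ 2 ≤ ((b : ℝ) * d) ^ w := by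
  have hbR : (0 : ℝ) < b := by exact_mod_cast hb
  have hdR : (0 : ℝ) < d := by exact_mod_cast hd
  have hb1 : (1 : ℝ) ≤ b := by exact_mod_cast hb
  have hd1 : (1 : ℝ) ≤ d := by exact_mod_cast hd
  have hdetR : (b : ℝ) * c - a * d = 1 := by exact_mod_cast hdet
  have hid : (b * α - a) * d + (c - d * α) * b = 1 := by linear_combination hdetR
  have hB := hlow b (-a) hb
  have hD := hlow d (-c) hd
  push_cast at hB hD
  rw [abs_of_pos (by linarith), Real.rpow_neg hbR.le, ← div_eq_mul_inv,
    div_le_iff₀ (Real.rpow_pos_of_pos hbR _)] at hB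
  rw [abs_of_neg (by linarith), Real.rpow_neg hdR.le, ← div_eq_mul_inv,
    div_le_iff₀ (Real.rpow_pos_of_pos hdR _)] at hD
  have hbw : (b : ℝ) ≤ (b : ℝ) ^ w := by simpa using Real.rpow_le_rpow_of_exponent_le hb1 hw
  have hdw : (d : ℝ) ≤ (d : ℝ) ^ w := by simpa using Real.rpow_le_rpow_of_exponent_le hd1 hw
  have hB' : c₀ * d ≤ (b : ℝ) ^ w :=
    calc c₀ * d ≤ ((b * α + -a) * (b : ℝ) ^ w) * d := by gcongr
      _ = ((b * α - a) * d) * (b : ℝ) ^ w := by ring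
      _ ≤ 1 * (b : ℝ) ^ w := by
        gcongr
        have : 0 < (c - d * α) * b := mul_pos (by linarith) hbR
        linarith
      _ = _ := one_mul _
  have hD' : c₀ * b ≤ (d : ℝ) ^ w :=
    calc c₀ * b ≤ (-(d * α + -c) * (d : ℝ) ^ w) * b := by gcongr
      _ = ((c - d * α) * b) * (d : ℝ) ^ w := by ring
      _ ≤ 1 * (d : ℝ) ^ w := by
        gcongr
        have : 0 < (b * α - a) * d := mul_pos (by linarith) hdR
        linarith
      _ = _ := one_mul _
  rw [Real.mul_rpow hbR.le hdR.le]
  rcases le_total b d with hle | hle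
  · have hle' : (b : ℝ) ≤ d := by exact_mod_cast hle
    calc c₀ / 4 * X ^ 2 ≤ c₀ / 4 * (2 * d) ^ 2 := by gcongr; linarith
      _ = (c₀ * d) * d := by ring
      _ ≤ _ := by gcongr
  · have hle' : (d : ℝ) ≤ b := by exact_mod_cast hle
    calc c₀ / 4 * X ^ 2 ≤ c₀ / 4 * (2 * b) ^ 2 := by gcongr; linarith
      _ = b * (c₀ * b) := by ring
      _ ≤ _ := by gcongr

theorem abs_le_of_mul_add_sub_eq {v u ξ y E B F : ℝ} (hv : 0 ≤ v) (hvB : v ≤ B) (hy : 0 ≤ y)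
    (hE0 : 0 ≤ E) (hE : E ≤ F) (h : v * ξ + u - y = E) : |u| ≤ y + F + |ξ| * B := by
  have hvξ : |v * ξ| ≤ |ξ| * B := by
    rw [abs_mul, abs_of_nonneg hv, mul_comm]
    gcongr
  rw [abs_le] at hvξ ⊢
  constructor <;> linarith [hvξ.1, hvξ.2]

/-- Neighbours of `y₁ / y₂` and of `ξ` combine, through a unipotent matrix in the middle, into a
matrix in `SL(2, ℤ)` sending `(ξ, 1)` close to `(y₁, y₂)` from above. -/
theorem exists_approx_of_neighbours {ξ y₁ y₂ : ℝ} (hy₁ : 0 < y₁) (hy₂ : 0 < y₂)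
    {t' s' t s p' q' p q : ℤ} (hs' : 0 < s') (hs : 0 < s) (hdet : s' * t - t' * s = 1)
    (ht' : (t' : ℝ) < s' * (y₁ / y₂)) (ht : s * (y₁ / y₂) < t)
    (hq' : 0 < q') (hqq : q' ≤ q) (hdetM : q' * p - p' * q = 1)
    (hp' : (p' : ℝ) < q' * ξ) (hp : q * ξ < p) (hε : p - q * ξ ≤ q' * ξ - p')
    {S : ℝ} (hsS : s ≤ S) (hs'S : s' ≤ S) (hSq : S ≤ q) :
    ∃ γ : Matrix (Fin 2) (Fin 2) ℤ, γ.det = 1 ∧ (q : ℝ) ≤ mnorm γ ∧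
      mnorm γ ≤ ((1 + |ξ|) * ((y₁ / y₂ + 1) * (2 * y₂ + 4)) + y₁ + y₂ +
        (y₂ + 2 * (y₁ / y₂ + 1))) * q ^ 2 ∧
      0 < γ 0 0 ∧ 0 < γ 1 0 ∧
      0 < (γ 0 0 : ℝ) * ξ + (γ 0 1 : ℝ) - y₁ ∧
      (γ 0 0 : ℝ) * ξ + (γ 0 1 : ℝ) - y₁ ≤ y₂ / (s' * s) + 2 * (y₁ / y₂ + 1) * (S / q) ∧
      0 < (γ 1 0 : ℝ) * ξ + (γ 1 1 : ℝ) - y₂ ∧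
      (γ 1 0 : ℝ) * ξ + (γ 1 1 : ℝ) - y₂ ≤ 2 * (S / q) := by
  obtain ⟨y, hy⟩ : ∃ y, y = y₁ / y₂ := ⟨_, rfl⟩
  have hy0 : 0 < y := hy ▸ by positivity
  have hy1 : y₁ = y * y₂ := by rw [hy]; field_simp
  rw [← hy] at ht' ht ⊢
  have hsR : (1 : ℝ) ≤ s := by exact_mod_cast hs
  have hs'R : (1 : ℝ) ≤ s' := by exact_mod_cast hs'
  have hq'R : (1 : ℝ) ≤ q' := by exact_mod_cast hq'
  have hqqR : (q' : ℝ) ≤ q := by exact_mod_cast hqq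
  have hqR : (1 : ℝ) ≤ q := hq'R.trans hqqR
  have hdetR : (s' : ℝ) * t - t' * s = 1 := by exact_mod_cast hdet
  have hdetMR : (q' : ℝ) * p - p' * q = 1 := by exact_mod_cast hdetM
  obtain ⟨e, he⟩ : ∃ e, e = q' * ξ - p' := ⟨_, rfl⟩
  obtain ⟨f, hf⟩ : ∃ f, f = p - q * ξ := ⟨_, rfl⟩
  have he0 : 0 < e := by linarith
  have hf0 : 0 < f := by linarith
  have hfe : f ≤ e := by linarith
  have hef : e * q + f * q' = 1 := by rw [he, hf]; linear_combination hdetMR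
  have hfq : 0 < f * q' := by positivity
  have heq1 : e * q ≤ 1 := by linarith
  have hfqe : f * q' ≤ e * q := by gcongr
  have heq2 : 1 ≤ 2 * q * e := by linarith
  have he1 : e ≤ 1 / q := by rw [le_div_iff₀ (by linarith)]; exact heq1
  have htid : (s' * y - t') * s + (t - s * y) * s' = 1 := by linear_combination hdetR
  have ht'0 : 0 ≤ t' := by
    have h : (s' * y - t') * s ≤ 1 := by
      have : 0 < (t - s * y) * s' := mul_pos (by linarith) (by linarith)
      linarith
    have h' : s' * y - t' ≤ 1 := (le_mul_of_one_le_right (by linarith) hsR).trans h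
    have : 0 < s' * y := by positivity
    have : (-1 : ℝ) < t' := by linarith
    have : (-1 : ℤ) < t' := by exact_mod_cast this
    omega
  have ht'0R : (0 : ℝ) ≤ t' := by exact_mod_cast ht'0
  have ht0R : (0 : ℝ) < t := lt_trans (by positivity) ht
  have ht0 : 0 < t := by exact_mod_cast ht0R
  have htd : (t - s * y) * s' ≤ 1 := by
    have : 0 < (s' * y - t') * s := mul_pos (by linarith) (by linarith)
    linarith
  have htle : (t : ℝ) ≤ (y + 1) * s := by
    have : t - s * y ≤ 1 := (le_mul_of_one_le_right (by linarith) hs'R).trans htd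
    linarith
  have ht'le : (t' : ℝ) ≤ (y + 1) * s' := by linarith
  obtain ⟨l, hl⟩ : ∃ l : ℤ, l = ⌊(y₂ / s + f) / e⌋ + 1 := ⟨_, rfl⟩
  have hl1 : y₂ / s + f < l * e := by
    rw [← div_lt_iff₀ he0, hl]; push_cast; exact Int.lt_floor_add_one _
  have hl2 : (l - 1 : ℝ) * e ≤ y₂ / s + f := by
    rw [← le_div_iff₀ he0, hl]; push_cast; rw [add_sub_cancel_right]; exact Int.floor_le _
  have hys : 0 < y₂ / s := by positivity
  have hl0R : (0 : ℝ) < l := by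
    refine pos_of_mul_pos_left (b := e) ?_ he0.le
    linarith
  have hl0 : 0 < l := by exact_mod_cast hl0R
  obtain ⟨δ, hδ⟩ : ∃ δ, δ = l * e - f - y₂ / s := ⟨_, rfl⟩
  have hδ0 : 0 < δ := by linarith
  have hδe : δ ≤ e := by linarith
  have hss : s * (y₂ / s) = y₂ := by field_simp
  have hsl : (s : ℝ) * l ≤ 2 * q * y₂ + 2 * s := by
    have h1 : (l - 2 : ℝ) * e * s ≤ y₂ := by
      calc (l - 2 : ℝ) * e * s ≤ (y₂ / s) * s := by gcongr; linarith
        _ = y₂ := by field_simp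
    rcases le_total (l : ℝ) 2 with h | h
    · have h3 : (s : ℝ) * l ≤ s * 2 := by gcongr
      have h4 : 0 < 2 * q * y₂ := by positivity
      linarith
    · have : (l - 2 : ℝ) * s ≤ 2 * q * y₂ :=
        calc (l - 2 : ℝ) * s = ((l - 2 : ℝ) * s) * 1 := by ring
          _ ≤ ((l - 2 : ℝ) * s) * (2 * q * e) := by
            have : 0 ≤ (l - 2 : ℝ) * s := mul_nonneg (by linarith) (by linarith)
            gcongr
          _ = 2 * q * ((l - 2 : ℝ) * e * s) := by ring
          _ ≤ _ := by gcongr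
      linarith
  have hV : (s : ℝ) * (q + l * q') + s' * q' ≤ (2 * y₂ + 4) * q ^ 2 :=
    calc (s : ℝ) * (q + l * q') + s' * q' = s * q + (s * l) * q' + s' * q' := by ring
      _ ≤ q * q + (2 * q * y₂ + 2 * q) * q + q * q := by
        have := hsS.trans hSq
        have := hs'S.trans hSq
        gcongr
        linarith
      _ = _ := by ring
  have hx1 : ((t * (q + l * q') + t' * q' : ℤ) : ℝ) * ξ
      + ((-(t * (p + l * p') + t' * p') : ℤ) : ℝ) - y₁
      = (t - s * y) * (y₂ / s) + (t * δ + t' * e) := by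
    push_cast
    rw [hδ, he, hf, hy1]
    linear_combination y * hss
  have hx2 : ((s * (q + l * q') + s' * q' : ℤ) : ℝ) * ξ
      + ((-(s * (p + l * p') + s' * p') : ℤ) : ℝ) - y₂
      = s * δ + s' * e := by
    push_cast
    rw [hδ, he, hf]
    linear_combination hss
  have hE2 : s * δ + s' * e ≤ 2 * (S / q) :=
    calc s * δ + s' * e ≤ S * (1 / q) + S * (1 / q) := by
          have := hδe.trans he1
          have : 0 ≤ S := by linarith
          gcongr
      _ = _ := by ring
  have hE1 : (t - s * y) * (y₂ / s) + (t * δ + t' * e)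
      ≤ y₂ / (s' * s) + 2 * (y + 1) * (S / q) := by
    have h1 : (t - s * y) * (y₂ / s) ≤ y₂ / (s' * s) :=
      calc (t - s * y) * (y₂ / s) = ((t - s * y) * s') * (y₂ / (s' * s)) := by field_simp
        _ ≤ 1 * (y₂ / (s' * s)) := by gcongr
        _ = _ := one_mul _
    have h2 : t * δ + t' * e ≤ 2 * (y + 1) * (S / q) :=
      calc t * δ + t' * e ≤ ((y + 1) * s) * δ + ((y + 1) * s') * e := by gcongr
        _ = (y + 1) * (s * δ + s' * e) := by ring
        _ ≤ (y + 1) * (2 * (S / q)) := by gcongr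
        _ = _ := by ring
    linarith
  have hE2pos : 0 < s * δ + s' * e := by positivity
  have hE1pos : 0 < (t - s * y) * (y₂ / s) + (t * δ + t' * e) := by
    have : 0 < (t - s * y) := by linarith
    positivity
  have hSq1 : S / q ≤ 1 := by rw [div_le_one (by linarith)]; exact hSq
  have hE2' : s * δ + s' * e ≤ y₂ + 2 * (y + 1) := by linarith
  have hE1' : (t - s * y) * (y₂ / s) + (t * δ + t' * e) ≤ y₂ + 2 * (y + 1) := by
    refine hE1.trans (add_le_add ?_ ?_)
    · exact div_le_self hy₂.le (one_le_mul_of_one_le_of_one_le hs'R hsR)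
    · exact mul_le_of_le_one_right (by positivity) hSq1
  have hq2 : (1 : ℝ) ≤ (q : ℝ) ^ 2 := one_le_pow₀ hqR
  have hq0 : 0 < q := by omega
  have hv1 : 0 < t * (q + l * q') + t' * q' := by positivity
  have hv2 : 0 < s * (q + l * q') + s' * q' := by positivity
  have hV2 : ((s * (q + l * q') + s' * q' : ℤ) : ℝ) ≤ ((y + 1) * (2 * y₂ + 4)) * q ^ 2 := by
    push_cast
    refine hV.trans ?_
    have : 0 ≤ y * ((2 * y₂ + 4) * (q : ℝ) ^ 2) := by positivity
    linarith
  have hV1 : ((t * (q + l * q') + t' * q' : ℤ) : ℝ) ≤ ((y + 1) * (2 * y₂ + 4)) * q ^ 2 := by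
    push_cast
    calc (t : ℝ) * (q + l * q') + t' * q'
        ≤ ((y + 1) * s) * (q + l * q') + ((y + 1) * s') * q' := by gcongr
      _ = (y + 1) * (s * (q + l * q') + s' * q') := by ring
      _ ≤ (y + 1) * ((2 * y₂ + 4) * q ^ 2) := by gcongr
      _ = _ := by ring
  have hU1 := abs_le_of_mul_add_sub_eq (by exact_mod_cast hv1.le) hV1 hy₁.le hE1pos.le hE1' hx1
  have hU2 := abs_le_of_mul_add_sub_eq (by exact_mod_cast hv2.le) hV2 hy₂.le hE2pos.le hE2' hx2
  obtain ⟨B, hB⟩ : ∃ B, B = ((y + 1) * (2 * y₂ + 4)) := ⟨_, rfl⟩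
  obtain ⟨G, hG⟩ : ∃ G, G = y₂ + 2 * (y + 1) := ⟨_, rfl⟩
  have hB0 : 0 ≤ B := hB ▸ by positivity
  have hG0 : 0 ≤ G := hG ▸ by positivity
  rw [← hB] at hV1 hV2 hU1 hU2 ⊢
  rw [← hG] at hU1 hU2 ⊢
  have hy1q : y₁ ≤ y₁ * (q : ℝ) ^ 2 := le_mul_of_one_le_right hy₁.le hq2
  have hy2q : y₂ ≤ y₂ * (q : ℝ) ^ 2 := le_mul_of_one_le_right hy₂.le hq2
  have hGq : G ≤ G * (q : ℝ) ^ 2 := le_mul_of_one_le_right hG0 hq2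
  have hξB : 0 ≤ |ξ| * (B * (q : ℝ) ^ 2) := by positivity
  have hBq : 0 ≤ B * (q : ℝ) ^ 2 := by positivity
  refine ⟨!![t * (q + l * q') + t' * q', -(t * (p + l * p') + t' * p');
    s * (q + l * q') + s' * q', -(s * (p + l * p') + s' * p')], ?_, ?_, ?_, hv1, hv2,
    ?_, ?_, ?_, ?_⟩
  · rw [Matrix.det_fin_two_of]
    linear_combination (s' * t - t' * s) * hdetM + hdet
  · have h : q ≤ s * (q + l * q') + s' * q' := by
      have : 1 * q ≤ s * q := by gcongr; omega
      have : 0 < s * (l * q') := by positivity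
      have : 0 < s' * q' := by positivity
      linarith
    have h' : (q : ℝ) ≤ ((s * (q + l * q') + s' * q' : ℤ) : ℝ) := by exact_mod_cast h
    exact h'.trans ((le_abs_self _).trans ((le_max_left _ _).trans (le_max_right _ _)))
  · refine max_le (max_le ?_ ?_) (max_le ?_ ?_)
    · change |((t * (q + l * q') + t' * q' : ℤ) : ℝ)| ≤ _
      rw [abs_of_pos (by exact_mod_cast hv1)]
      linarith
    · change |((-(t * (p + l * p') + t' * p') : ℤ) : ℝ)| ≤ _
      linarith
    · change |((s * (q + l * q') + s' * q' : ℤ) : ℝ)| ≤ _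
      rw [abs_of_pos (by exact_mod_cast hv2)]
      linarith
    · change |((-(s * (p + l * p') + s' * p') : ℤ) : ℝ)| ≤ _
      linarith
  · exact hx1 ▸ hE1pos
  · exact hx1 ▸ hE1
  · exact hx2 ▸ hE2pos
  · exact hx2 ▸ hE2

/-- Theorem 5: approximation with signs. For every `0 < μ < 1/3` there are
infinitely many `γ = [[v₁, u₁], [v₂, u₂]] ∈ SL(2, ℤ)` with `v₁ > 0`, `v₂ > 0`,
`0 < v₁ξ + u₁ - y₁ ≤ |γ|^{-μ}` and `0 < v₂ξ + u₂ - y₂ ≤ |γ|^{-μ}`. -/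
theorem stmt17 (ξ : ℝ) (hξ : Irrational ξ) (y₁ y₂ : ℝ) (hy₁ : 0 < y₁) (hy₂ : 0 < y₂)
    (hy : Irrational (y₁ / y₂))
    (hωy : ∀ ε : ℝ, 0 < ε →
      {p : ℤ × ℤ | |(p.1 : ℝ) * (y₁ / y₂) + (p.2 : ℝ)| ≤ |(p.1 : ℝ)| ^ (-(1 + ε))}.Finite)
    (μ : ℝ) (hμ0 : 0 < μ) (hμ : μ < 1 / 3) :
    ∀ T : ℝ, ∃ γ : Matrix (Fin 2) (Fin 2) ℤ,
      γ.det = 1 ∧ T < mnorm γ ∧ 0 < γ 0 0 ∧ 0 < γ 1 0 ∧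
        0 < (γ 0 0 : ℝ) * ξ + (γ 0 1 : ℝ) - y₁ ∧
        (γ 0 0 : ℝ) * ξ + (γ 0 1 : ℝ) - y₁ ≤ mnorm γ ^ (-μ) ∧
        0 < (γ 1 0 : ℝ) * ξ + (γ 1 1 : ℝ) - y₂ ∧
        (γ 1 0 : ℝ) * ξ + (γ 1 1 : ℝ) - y₂ ≤ mnorm γ ^ (-μ) := by
  obtain ⟨w, hw⟩ : ∃ w, w = 2 / (1 + 3 * μ) := ⟨_, rfl⟩
  have hw1 : 1 < w := by rw [hw, lt_div_iff₀ (by positivity)]; linarith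
  have hw0 : 0 < w := by linarith
  have hκw : w * (1 + 3 * μ) = 2 := by rw [hw]; field_simp
  have hfin := hωy (w - 1) (by linarith)
  rw [add_sub_cancel] at hfin
  obtain ⟨c₀, hc₀, hlow⟩ := exists_pos_mul_rpow_le_abs hy hfin
  intro T
  obtain ⟨K, hK⟩ : ∃ K, K = (1 + |ξ|) * ((y₁ / y₂ + 1) * (2 * y₂ + 4)) + y₁ + y₂ +
    (y₂ + 2 * (y₁ / y₂ + 1)) := ⟨_, rfl⟩
  obtain ⟨A, hA⟩ : ∃ A, A = (c₀ / 4) ^ (1 / w) := ⟨_, rfl⟩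
  obtain ⟨C, hC⟩ : ∃ C, C = y₂ / A + 4 * (y₁ / y₂ + 1) := ⟨_, rfl⟩
  have hK0 : 0 < K := hK ▸ by positivity
  have hA0 : 0 < A := hA ▸ by positivity
  have hC0 : 0 < C := hC ▸ by positivity
  obtain ⟨X₀, hX₀⟩ := Filter.eventually_atTop.1
    ((tendsto_rpow_atTop (show 0 < 1 - 3 * μ by linarith)).eventually_ge_atTop (C * K ^ μ))
  obtain ⟨N, hN⟩ := exists_nat_ge (max T (max 1 X₀ ^ 3))
  obtain ⟨p', q', p, q, hq', hqq, hNq, hdetM, hp', hp, hε⟩ := exists_neighbours_upper_closer hξ N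
  have hNqR : (N : ℝ) < q := by exact_mod_cast hNq
  have hq0 : (0 : ℝ) < q := lt_of_le_of_lt (Nat.cast_nonneg N) hNqR
  obtain ⟨X, hX⟩ : ∃ X : ℝ, X = (q : ℝ) ^ (1 / 3 : ℝ) := ⟨_, rfl⟩
  have hX0 : 0 ≤ X := hX ▸ by positivity
  have hX3 : X ^ 3 = q := by
    rw [hX, ← Real.rpow_natCast, ← Real.rpow_mul hq0.le]
    norm_num
  have hXge : max 1 X₀ ≤ X := by
    refine le_of_pow_le_pow_left₀ (n := 3) (by norm_num) hX0 ?_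
    rw [hX3]
    exact (le_max_right _ _).trans (hN.trans hNqR.le)
  have hX1 : 1 ≤ X := (le_max_left _ _).trans hXge
  have hXpos : 0 < X := by linarith
  have hbig := hX₀ X ((le_max_right _ _).trans hXge)
  have hceil : 1 ≤ ⌈X⌉₊ := Nat.one_le_ceil_iff.2 hXpos
  obtain ⟨t', s', t, s, hs', hs, hs'S, hsS, hsum, hdet, ht', ht⟩ :=
    exists_farey_neighbours hy ⌈X⌉₊ hceil
  have hSX : (⌈X⌉₊ : ℝ) ≤ 2 * X := by linarith [Nat.ceil_lt_add_one hX0]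
  have hSq : (⌈X⌉₊ : ℝ) ≤ q := by
    have h : ⌈X⌉₊ ≤ q.toNat := by
      rw [Nat.ceil_le]
      have h0 : ((q.toNat : ℤ) : ℝ) = q := by
        rw [Int.toNat_of_nonneg (by omega)]
      rw [Int.cast_natCast] at h0
      rw [h0, ← hX3]
      exact le_self_pow₀ hX1 (by norm_num)
    have h' : (⌈X⌉₊ : ℤ) ≤ q := by omega
    exact_mod_cast h'
  have hsumR : X ≤ s' + s := by
    have : ((⌈X⌉₊ : ℤ) : ℝ) < s' + s := by exact_mod_cast hsum
    push_cast at this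
    exact (Nat.le_ceil X).trans this.le
  have hprod := mul_sq_le_denominators_rpow hc₀ hw1.le hlow hs' hs hdet ht' ht hX0 hsumR
  have hsR : (0 : ℝ) < s := by exact_mod_cast hs
  have hs'R : (0 : ℝ) < s' := by exact_mod_cast hs'
  have hprod' : A * X ^ (1 + 3 * μ) ≤ (s' : ℝ) * s := by
    have h := Real.rpow_le_rpow (by positivity) hprod (show 0 ≤ 1 / w by positivity)
    rw [← Real.rpow_mul (by positivity), mul_one_div_cancel hw0.ne', Real.rpow_one,
      Real.mul_rpow (by positivity) (by positivity), ← hA, ← Real.rpow_natCast,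
      ← Real.rpow_mul hX0] at h
    convert h using 3
    rw [Nat.cast_ofNat, ← hκw]
    field_simp
  obtain ⟨γ, hdetγ, hqγ, hγK, h00, h10, hl1, hu1, hl2, hu2⟩ :=
    exists_approx_of_neighbours hy₁ hy₂ hs' hs hdet ht' ht hq' hqq hdetM hp' hp hε
      (S := ⌈X⌉₊) (by exact_mod_cast hsS) (by exact_mod_cast hs'S) hSq
  rw [← hK, ← hX3] at hγK
  have hSdiv : (⌈X⌉₊ : ℝ) / q ≤ 2 * X ^ (-(1 + 3 * μ)) := by
    calc (⌈X⌉₊ : ℝ) / q ≤ (2 * X) / q := by gcongr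
      _ = 2 * X ^ (-2 : ℝ) := by
        rw [← hX3, Real.rpow_neg hX0, Real.rpow_two]
        field_simp
      _ ≤ _ := by
        gcongr 2 * ?_
        exact Real.rpow_le_rpow_of_exponent_le hX1 (by linarith)
  have hyA : y₂ / (s' * s) ≤ y₂ / A * X ^ (-(1 + 3 * μ)) := by
    calc y₂ / (s' * s) ≤ y₂ / (A * X ^ (1 + 3 * μ)) := by gcongr
      _ = _ := by rw [Real.rpow_neg hX0]; field_simp
  have hγ0 : 0 < mnorm γ := hq0.trans_le hqγ
  have hmain : C * X ^ (-(1 + 3 * μ)) ≤ mnorm γ ^ (-μ) :=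
    calc C * X ^ (-(1 + 3 * μ)) = C * K ^ μ * (K ^ (-μ) * X ^ (-(1 + 3 * μ))) := by
          rw [Real.rpow_neg hK0.le]
          field_simp
      _ ≤ X ^ (1 - 3 * μ) * (K ^ (-μ) * X ^ (-(1 + 3 * μ))) := by gcongr
      _ = K ^ (-μ) * X ^ (6 * -μ) := by
          rw [mul_left_comm, ← Real.rpow_add hXpos]
          ring_nf
      _ = (K * (X ^ 3) ^ 2) ^ (-μ) := by
          rw [Real.mul_rpow hK0.le (by positivity), ← pow_mul, Real.rpow_mul hX0]
          norm_cast
      _ ≤ mnorm γ ^ (-μ) := Real.rpow_le_rpow_of_nonpos hγ0 hγK (by linarith)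
  have hXκ : 0 < X ^ (-(1 + 3 * μ)) := by positivity
  refine ⟨γ, hdetγ, ?_, h00, h10, hl1, ?_, hl2, ?_⟩
  · exact ((le_max_left _ _).trans hN).trans_lt (hNqR.trans_le hqγ)
  · refine (hu1.trans ?_).trans hmain
    have h := mul_le_mul_of_nonneg_left hSdiv (show 0 ≤ 2 * (y₁ / y₂ + 1) by positivity)
    rw [hC]
    linarith
  · refine (hu2.trans ?_).trans hmain
    have h1 : 0 < y₂ / A * X ^ (-(1 + 3 * μ)) := by positivity
    have h2 : 0 < (y₁ / y₂) * X ^ (-(1 + 3 * μ)) := by positivity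
    rw [hC]
    linarith
end
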